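/- Let ι be a finite index type with at least two elements, let q : ι → ℝ be a probability vector, let y : ι satisfy q_y = 0, and let (ℓ⁽ⁿ⁾)_{n∈ℕ} be a sequence of logit vectors ℓ⁽ⁿ⁾ : ι → ℝ such that F_q(ℓ⁽ⁿ⁾) → 0 as n → ∞. Then softmax(ℓ⁽ⁿ⁾)_y → 0 as n → ∞; that is, along any sequence minimizing the KL objective, the predicted probability of the zero-target class y tends to zero. -/

import Mathlib

/-!
The inequality `log x ≥ 1 - 1 / x` gives `q i * log (q i / p i) ≥ q i - p i` for every class, where
`p = softmax ℓ`. At the zero-target class `y` the left side is exactly `0`, which exceeds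
`q y - p y` by `p y`. Summing, with `∑ q = ∑ p = 1`, yields `p y ≤ F_q(ℓ)`
(`softmax_le_klObj`), and the limit follows by squeezing.
-/

open Finset Real Filter

/-- Softmax of a logit vector on a finite index type. -/
noncomputable def softmax {ι : Type*} [Fintype ι] (ℓ : ι → ℝ) (i : ι) : ℝ :=
  Real.exp (ℓ i) / ∑ j, Real.exp (ℓ j)

/-- Discrete KL objective `F_q(ℓ) = ∑ i, q i * log (q i / softmax ℓ i)`.
Terms with `q i = 0` contribute `0` automatically since `0 * x = 0`. -/
noncomputable def klObj {ι : Type*} [Fintype ι] (q ℓ : ι → ℝ) : ℝ :=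
  ∑ i, q i * Real.log (q i / softmax ℓ i)

theorem softmax_apply_pos {ι : Type*} [Fintype ι] (ℓ : ι → ℝ) (i : ι) : 0 < softmax ℓ i :=
  div_pos (Real.exp_pos _) (Finset.sum_pos (fun _ _ => Real.exp_pos _) ⟨i, Finset.mem_univ i⟩)

theorem sum_softmax_eq_one {ι : Type*} [Fintype ι] [Nonempty ι] (ℓ : ι → ℝ) :
    ∑ i, softmax ℓ i = 1 := by
  unfold softmax
  rw [← Finset.sum_div]
  exact div_self (Finset.sum_pos (fun _ _ => Real.exp_pos _) Finset.univ_nonempty).ne'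

theorem sub_le_mul_log_div {a p : ℝ} (ha : 0 ≤ a) (hp : 0 < p) :
    a - p ≤ a * Real.log (a / p) := by
  rcases ha.eq_or_lt with rfl | ha
  · simpa using hp.le
  · have h := mul_le_mul_of_nonneg_left (Real.one_sub_inv_le_log_of_pos (div_pos ha hp)) ha.le
    have e : a * (1 - (a / p)⁻¹) = a - p := by field_simp
    linarith

/-- The KL objective dominates the predicted probability of any zero-target class. -/
theorem softmax_le_klObj {ι : Type*} [Fintype ι] (q : ι → ℝ) (hq0 : ∀ i, 0 ≤ q i)
    (hq1 : ∑ i, q i = 1) (y : ι) (hqy : q y = 0) (ℓ : ι → ℝ) :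
    softmax ℓ y ≤ klObj q ℓ := by
  classical
  have : Nonempty ι := ⟨y⟩
  have h : ∑ i, (q i - softmax ℓ i + if i = y then softmax ℓ y else 0) ≤ klObj q ℓ := by
    refine Finset.sum_le_sum fun i _ => ?_
    split_ifs with hi
    · subst hi
      simp [hqy]
    · simpa using sub_le_mul_log_div (hq0 i) (softmax_apply_pos ℓ i)
  simpa [Finset.sum_add_distrib, Finset.sum_sub_distrib, hq1, sum_softmax_eq_one] using h

theorem softmax_zero_target_tendsto_zero
    {ι : Type*} [Fintype ι] [Nontrivial ι]
    (q : ι → ℝ) (hq0 : ∀ i, 0 ≤ q i) (hq1 : ∑ i, q i = 1)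
    (y : ι) (hqy : q y = 0)
    (L : ℕ → ι → ℝ)
    (hL : Tendsto (fun n => klObj q (L n)) atTop (nhds 0)) :
    Tendsto (fun n => softmax (L n) y) atTop (nhds 0) := by
  exact squeeze_zero (fun n => (softmax_apply_pos (L n) y).le)
    (fun n => softmax_le_klObj q hq0 hq1 y hqy (L n)) hL
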